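/- Let f_ρ, f_π : U → (0,∞) be continuous probability densities w.r.t. μ, and set ρ := f_ρ·μ, π := f_π·μ. Then: (1) the Knothe–Rosenblatt transport T = (T_j)_{j∈ℕ} : U → U, defined componentwise via the conditional CDFs, is bijective, Borel measurable, and T_♯ρ = π; (2) the products ∏_{j=1}^n ∂_{x_j}T_j(x_{[j]}) converge uniformly on U as n → ∞ to a continuous positive function det dT : U → (0,∞), and f_π(T(x))·det dT(x) = f_ρ(x) for all x ∈ U. -/

import Mathlib

open Set MeasureTheory Filter

/-- The uniform probability measure `μ₁` on `[-1,1]` (half of Lebesgue measure). -/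
noncomputable def mu1 : Measure ℝ :=
  (2 : ENNReal)⁻¹ • (volume.restrict (Set.Icc (-1 : ℝ) 1))

/-- The infinite-dimensional cube `U = [-1,1]^ℕ`, realized inside `ℕ → ℝ`. -/
def cubeInf : Set (ℕ → ℝ) := {x | ∀ i, x i ∈ Set.Icc (-1 : ℝ) 1}

/-- `μ` is the countable product `⨂_{i∈ℕ} μ₁`, characterized through its values on
finite-dimensional cylinder sets. -/
def IsProductOfMu1 (μ : Measure (ℕ → ℝ)) : Prop :=
  IsProbabilityMeasure μ ∧
    ∀ s : ℕ → Set ℝ, (∀ i, MeasurableSet (s i)) → ∀ n : ℕ,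
      μ {x | ∀ i < n, x i ∈ s i} = ∏ i ∈ Finset.range n, mu1 (s i)

/-- The marginal `f̂_k(x) = ∫_U f(x_{[k]}, t) dμ(t)`. -/
noncomputable def hatInf (μ : Measure (ℕ → ℝ)) (f : (ℕ → ℝ) → ℝ) (k : ℕ) (x : ℕ → ℝ) : ℝ :=
  ∫ t : ℕ → ℝ, f (fun i => if i < k then x i else t i) ∂μ

/-- The conditional CDF `F_{f;k}(x_{[k-1]}, x_k) = ∫_{-1}^{x_k} (f̂_k/f̂_{k-1}) dμ₁`
(the component `k = j+1` being indexed by `j : ℕ`). -/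
noncomputable def FCDFInf (μ : Measure (ℕ → ℝ)) (f : (ℕ → ℝ) → ℝ) (j : ℕ) (x : ℕ → ℝ) : ℝ :=
  (∫ t in Set.Icc (-1 : ℝ) (x j), hatInf μ f (j + 1) (Function.update x j t) ∂mu1) /
    hatInf μ f j x

/-- `∂_{x_j} T_j` (one-sided at the endpoints of `[-1,1]`). -/
noncomputable def pdInf (T : ℕ → (ℕ → ℝ) → ℝ) (j : ℕ) (x : ℕ → ℝ) : ℝ :=
  derivWithin (fun t => T j (Function.update x j t)) (Set.Icc (-1 : ℝ) 1) (x j)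

/-!
The conditional CDFs of a density `f`, taken as coordinates, form the Rosenblatt transform `Φ_f`,
a homeomorphism of the cube onto `[0,1]^ℕ` sending `f · μ` to the uniform distribution. The
transport is characterized by `Φ_π ∘ T = Φ_ρ`, so its bijectivity, continuity and push-forward
identity are inherited from the two transforms. Differentiating `F_{π;j} ∘ T = F_{ρ;j}` in `x_j`
gives `∂_{x_j} T_j` as the quotient of the conditional densities at `x` and `T x`; the product of
these quotients telescopes to a quotient of marginals, and on the compact cube the marginals of a
continuous function converge to it uniformly.
-/

open Topology
open scoped ENNReal

section InfinitePi

variable {ι : Type*} {X : ι → Type*} [∀ i, MeasurableSpace (X i)]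
  (ν : ∀ i, Measure (X i)) [∀ i, IsProbabilityMeasure (ν i)]

theorem measurePreserving_piecewise_infinitePi (s : Set ι) [DecidablePred (· ∈ s)] :
    MeasurePreserving (fun q : (∀ i, X i) × (∀ i, X i) => s.piecewise q.1 q.2)
      ((Measure.infinitePi ν).prod (Measure.infinitePi ν)) (Measure.infinitePi ν) := by
  have hmeas : Measurable fun q : (∀ i, X i) × (∀ i, X i) => s.piecewise q.1 q.2 := by
    refine measurable_pi_lambda _ fun i => ?_
    by_cases hi : i ∈ s <;> simp only [piecewise, hi, if_true, if_false] <;> fun_prop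
  refine ⟨hmeas, Measure.eq_infinitePi _ fun F t ht => ?_⟩
  have hpre : (fun q : (∀ i, X i) × (∀ i, X i) => s.piecewise q.1 q.2) ⁻¹' (F : Set ι).pi t =
      (F.filter (· ∈ s) : Set ι).pi t ×ˢ (F.filter (· ∉ s) : Set ι).pi t := by
    ext ⟨x, y⟩
    simp only [mem_preimage, Set.mem_pi, mem_prod, Finset.coe_filter, mem_ofPred_eq,
      Finset.mem_coe, and_imp, ← forall₂_and]
    refine forall₂_congr fun i _ => ?_
    by_cases hi : i ∈ s <;> simp [hi]
  rw [Measure.map_apply hmeas (.pi F.countable_toSet fun i _ => ht i), hpre, Measure.prod_prod,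
    Measure.infinitePi_pi _ fun i _ => ht i, Measure.infinitePi_pi _ fun i _ => ht i,
    Finset.prod_filter_mul_prod_filter_not]

theorem measurePreserving_update_infinitePi [DecidableEq ι] (k : ι) :
    MeasurePreserving (fun q : (∀ i, X i) × X k => Function.update q.1 k q.2)
      ((Measure.infinitePi ν).prod (ν k)) (Measure.infinitePi ν) := by
  have heval := (MeasurePreserving.id (Measure.infinitePi ν)).prod
    (measurePreserving_eval_infinitePi ν k)
  refine ⟨measurable_update', ?_⟩
  rw [← heval.map_eq, Measure.map_map measurable_update' heval.measurable]
  convert (measurePreserving_piecewise_infinitePi ν {k}ᶜ).map_eq using 2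
  ext ⟨x, y⟩ i
  by_cases hi : i = k
  · subst hi; simp
  · simp [hi]

theorem eq_infinitePi_of_forall_lt {Y : ℕ → Type*} [∀ i, MeasurableSpace (Y i)]
    (ν : ∀ i, Measure (Y i)) [∀ i, IsProbabilityMeasure (ν i)] {P : Measure (∀ i, Y i)}
    (hP : ∀ s : ∀ i, Set (Y i), (∀ i, MeasurableSet (s i)) → ∀ n : ℕ,
      P {x | ∀ i < n, x i ∈ s i} = ∏ i ∈ Finset.range n, ν i (s i)) :
    P = Measure.infinitePi ν := by
  classical
  refine Measure.eq_infinitePi _ fun F t ht => ?_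
  obtain ⟨n, hn⟩ := F.exists_nat_subset_range
  have hcyl : (F : Set ℕ).pi t = {x | ∀ i < n, x i ∈ if i ∈ F then t i else univ} := by
    ext x
    refine ⟨fun h i _ => ?_, fun h i hi => ?_⟩
    · split_ifs with hi
      exacts [h i hi, mem_univ _]
    · simpa only [Finset.mem_coe.1 hi, if_true] using h i (Finset.mem_range.1 (hn hi))
  rw [hcyl, hP _ (fun i => by split_ifs; exacts [ht i, .univ]) n,
    ← Finset.prod_subset hn fun i _ hi => by simp [hi]]
  exact Finset.prod_congr rfl fun i hi => by simp [hi]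

end InfinitePi

section Piecewise

variable {ι : Type*} {X : ι → Type*} [∀ i, TopologicalSpace (X i)] (s : Set ι)
  [DecidablePred (· ∈ s)]

theorem continuous_piecewise_left (y : ∀ i, X i) :
    Continuous fun x : ∀ i, X i => s.piecewise x y := by
  refine continuous_pi fun i => ?_
  by_cases hi : i ∈ s <;> simp only [piecewise, hi, if_true, if_false] <;> fun_prop

theorem continuous_piecewise_right (x : ∀ i, X i) :
    Continuous fun y : ∀ i, X i => s.piecewise x y := by
  refine continuous_pi fun i => ?_
  by_cases hi : i ∈ s <;> simp only [piecewise, hi, if_true, if_false] <;> fun_prop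

end Piecewise

theorem tendstoUniformlyOn_piecewise_Iio {Y : ℕ → Type*} [∀ i, UniformSpace (Y i)]
    (S : Set ((∀ i, Y i) × ∀ i, Y i)) :
    TendstoUniformlyOn (fun n q => (Iio n).piecewise q.1 q.2) Prod.fst atTop S := by
  rw [tendstoUniformlyOn_iff_tendsto, Pi.uniformity, tendsto_iInf]
  refine fun i => tendsto_comap_iff.2 fun V hV => mem_map.2 ?_
  filter_upwards [tendsto_fst.eventually (eventually_gt_atTop i)] with z hz
  simpa [piecewise, hz] using refl_mem_uniformity hV

theorem update_eq_update_of_lt_succ {Y : ℕ → Type*} {j : ℕ} {x y : ∀ i, Y i}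
    (h : ∀ i < j, x i = y i) (s : Y j) :
    ∀ i < j + 1, Function.update x j s i = Function.update y j s i := by
  intro i hi
  rcases Nat.lt_succ_iff_lt_or_eq.1 hi with hij | rfl
  · simp [hij.ne, h i hij]
  · simp

theorem continuousOn_of_continuousOn_comp {X Y Z : Type*} [TopologicalSpace X]
    [TopologicalSpace Y] [TopologicalSpace Z] [T2Space Z] {S : Set X} {K : Set Y} {T : X → Y}
    {Φ : Y → Z} (hK : IsCompact K) (hΦ : ContinuousOn Φ K) (hinj : InjOn Φ K)
    (hT : MapsTo T S K) (hΦT : ContinuousOn (Φ ∘ T) S) : ContinuousOn T S := by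
  have := isCompact_iff_compactSpace.1 hK
  have hemb := hΦ.domRestrict.isClosedEmbedding hinj.injective
  rw [continuousOn_iff_continuous_domRestrict] at hΦT ⊢
  exact continuous_subtype_val.comp
    (hemb.isInducing.continuous_iff (f := hT.restrict T S K).2 hΦT)

theorem aemeasurable_of_continuousOn_of_ae_mem {X Y : Type*} [MeasurableSpace X]
    [TopologicalSpace X] [OpensMeasurableSpace X] [MeasurableSpace Y] [TopologicalSpace Y]
    [BorelSpace Y] {κ : Measure X} {K : Set X} {Φ : X → Y} (hK : MeasurableSet K)
    (hΦ : ContinuousOn Φ K) (hκ : ∀ᵐ x ∂κ, x ∈ K) : AEMeasurable Φ κ := by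
  rw [← Measure.restrict_eq_self_of_ae_mem hκ]
  exact hΦ.aemeasurable hK

theorem integrable_of_continuousOn_of_ae_mem {X E : Type*} [MeasurableSpace X]
    [TopologicalSpace X] [OpensMeasurableSpace X] [T2Space X] [NormedAddCommGroup E]
    {κ : Measure X} [IsFiniteMeasureOnCompacts κ] {K : Set X} {g : X → E}
    (hK : IsCompact K) (hg : ContinuousOn g K) (hκ : ∀ᵐ x ∂κ, x ∈ K) :
    Integrable g κ := by
  rw [← Measure.restrict_eq_self_of_ae_mem hκ]
  exact hg.integrableOn_compact hK

theorem measure_eq_map_image_of_injOn {X Y : Type*} [MeasurableSpace X] [TopologicalSpace X]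
    [BorelSpace X] [PolishSpace X] [MeasurableSpace Y] [TopologicalSpace Y] [BorelSpace Y]
    [T2Space Y] {κ : Measure X} {K A : Set X} {Φ : X → Y} (hK : MeasurableSet K)
    (hΦ : ContinuousOn Φ K) (hinj : InjOn Φ K) (hκ : ∀ᵐ x ∂κ, x ∈ K) (hA : MeasurableSet A) :
    κ A = κ.map Φ (Φ '' (A ∩ K)) := by
  have himage : MeasurableSet (Φ '' (A ∩ K)) :=
    (hA.inter hK).image_of_continuousOn_injOn (hΦ.mono inter_subset_right)
      (hinj.mono inter_subset_right)
  rw [Measure.map_apply_of_aemeasurable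
    (aemeasurable_of_continuousOn_of_ae_mem hK hΦ hκ) himage]
  refine measure_congr ?_
  filter_upwards [hκ] with x hx
  refine propext ⟨fun hxA => ⟨x, ⟨hxA, hx⟩, rfl⟩, ?_⟩
  rintro ⟨y, ⟨hyA, hyK⟩, hxy⟩
  exact hinj hyK hx hxy ▸ hyA

theorem measure_eq_of_map_eq_of_injOn {X Y : Type*} [MeasurableSpace X] [TopologicalSpace X]
    [BorelSpace X] [PolishSpace X] [MeasurableSpace Y] [TopologicalSpace Y] [BorelSpace Y]
    [T2Space Y] {κ₁ κ₂ : Measure X} {K : Set X} {Φ : X → Y} (hK : MeasurableSet K)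
    (hΦ : ContinuousOn Φ K) (hinj : InjOn Φ K) (h₁ : ∀ᵐ x ∂κ₁, x ∈ K) (h₂ : ∀ᵐ x ∂κ₂, x ∈ K)
    (h : κ₁.map Φ = κ₂.map Φ) : κ₁ = κ₂ := by
  ext A hA
  rw [measure_eq_map_image_of_injOn hK hΦ hinj h₁ hA,
    measure_eq_map_image_of_injOn hK hΦ hinj h₂ hA, h]

theorem lintegral_eq_lintegral_lintegral_of_measurePreserving {X Y Z : Type*}
    [MeasurableSpace X] [MeasurableSpace Y] [MeasurableSpace Z] {κ : Measure X} {η : Measure Y}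
    [SFinite η] {ζ : Measure Z} {φ : X × Y → Z} (hφ : MeasurePreserving φ (κ.prod η) ζ)
    {g : Z → ℝ≥0∞} (hg : AEMeasurable g ζ) :
    ∫⁻ z, g z ∂ζ = ∫⁻ x, ∫⁻ y, g (φ (x, y)) ∂η ∂κ := by
  rw [← hφ.map_eq] at hg ⊢
  rw [lintegral_map' hg hφ.measurable.aemeasurable]
  exact lintegral_prod _ (hg.comp_measurable hφ.measurable)

theorem hasDerivWithinAt_of_comp_left {𝕜 : Type*} [NontriviallyNormedField 𝕜] {f g h : 𝕜 → 𝕜}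
    {f' h' a : 𝕜} {s t : Set 𝕜} (hg : Tendsto g (𝓝[s] a) (𝓝[t] (g a)))
    (hf : HasDerivWithinAt f f' t (g a)) (hh : HasDerivWithinAt h h' s a) (hf' : f' ≠ 0)
    (hcomp : f ∘ g =ᶠ[𝓝[s] a] h) (ha : a ∈ s) : HasDerivWithinAt g (h' / f') s a := by
  simpa [div_eq_mul_inv] using (hf.hasFDerivWithinAt.of_comp_of_leftInverse hg
    hh.hasFDerivWithinAt hcomp (f'symm := .toSpanSingleton 𝕜 f'⁻¹) (fun _ => by simp [hf'])
    ha).hasDerivWithinAt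

section Cube

variable {μ : Measure (ℕ → ℝ)}

theorem cubeInf_eq_pi : cubeInf = univ.pi fun _ : ℕ => Icc (-1 : ℝ) 1 := by
  ext x
  simp only [cubeInf, mem_ofPred_eq, Set.mem_pi, mem_univ, true_imp_iff]

theorem isCompact_cubeInf : IsCompact cubeInf :=
  cubeInf_eq_pi ▸ isCompact_univ_pi fun _ => isCompact_Icc

theorem measurableSet_cubeInf : MeasurableSet cubeInf := isCompact_cubeInf.measurableSet

theorem update_mem_cubeInf {x : ℕ → ℝ} {s : ℝ} (hx : x ∈ cubeInf) (hs : s ∈ Icc (-1 : ℝ) 1)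
    (j : ℕ) : Function.update x j s ∈ cubeInf := by
  intro i
  by_cases hij : i = j
  · subst hij; simpa using hs
  · simpa [hij] using hx i

theorem piecewise_mem_cubeInf {x t : ℕ → ℝ} (hx : x ∈ cubeInf) (ht : t ∈ cubeInf) (k : ℕ) :
    (Iio k).piecewise x t ∈ cubeInf := by
  rw [cubeInf_eq_pi] at *
  exact piecewise_mem_pi _ hx ht

instance isProbabilityMeasure_restrict_Icc_zero_one :
    IsProbabilityMeasure (volume.restrict (Icc (0 : ℝ) 1)) := ⟨by simp⟩

instance isProbabilityMeasure_mu1 : IsProbabilityMeasure mu1 := by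
  refine ⟨?_⟩
  rw [mu1, Measure.smul_apply, Measure.restrict_apply_univ, Real.volume_Icc, smul_eq_mul]
  norm_num
  exact ENNReal.inv_mul_cancel (by norm_num) (by norm_num)

theorem ae_mu1_mem_Icc : ∀ᵐ s ∂mu1, s ∈ Icc (-1 : ℝ) 1 :=
  Measure.ae_smul_measure (ae_restrict_mem measurableSet_Icc) _

theorem lintegral_mu1 (g : ℝ → ℝ≥0∞) :
    ∫⁻ s, g s ∂mu1 = ∫⁻ s in Icc (-1) 1, 2⁻¹ * g s := by
  rw [mu1, lintegral_smul_measure, smul_eq_mul, lintegral_const_mul' _ _ (by simp)]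

theorem setIntegral_mu1 (g : ℝ → ℝ) {s : ℝ} (hs : s ∈ Icc (-1 : ℝ) 1) :
    ∫ t in Icc (-1) s, g t ∂mu1 = (∫ t in (-1)..s, g t) / 2 := by
  rw [mu1, Measure.restrict_smul, Measure.restrict_restrict_of_subset (Icc_subset_Icc_right hs.2),
    integral_smul_measure, integral_Icc_eq_integral_Ioc, intervalIntegral.integral_of_le hs.1]
  simp [div_eq_inv_mul]

theorem IsProductOfMu1.eq_infinitePi (hμ : IsProductOfMu1 μ) :
    μ = Measure.infinitePi fun _ => mu1 :=
  eq_infinitePi_of_forall_lt _ hμ.2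

theorem IsProductOfMu1.ae_mem_cubeInf (hμ : IsProductOfMu1 μ) :
    ∀ᵐ x ∂μ, x ∈ cubeInf := by
  rw [hμ.eq_infinitePi]
  exact ae_all_iff.2 fun i => (measurePreserving_eval_infinitePi _ i).quasiMeasurePreserving.ae
    ae_mu1_mem_Icc

theorem IsProductOfMu1.measurePreserving_update (hμ : IsProductOfMu1 μ) (k : ℕ) :
    MeasurePreserving (fun q : (ℕ → ℝ) × ℝ => Function.update q.1 k q.2) (μ.prod mu1) μ := by
  rw [hμ.eq_infinitePi]
  exact measurePreserving_update_infinitePi _ k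

theorem IsProductOfMu1.measurePreserving_piecewise_Iio (hμ : IsProductOfMu1 μ) (k : ℕ) :
    MeasurePreserving (fun q : (ℕ → ℝ) × (ℕ → ℝ) => (Iio k).piecewise q.1 q.2) (μ.prod μ) μ := by
  rw [hμ.eq_infinitePi]
  exact measurePreserving_piecewise_infinitePi _ (Iio k)

end Cube

section Marginal

variable {μ : Measure (ℕ → ℝ)} {f : (ℕ → ℝ) → ℝ}

theorem hatInf_congr {k : ℕ} {x y : ℕ → ℝ} (h : ∀ i < k, x i = y i) :
    hatInf μ f k x = hatInf μ f k y := by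
  refine integral_congr_ae (.of_forall fun t => congrArg f (funext fun i => ?_))
  by_cases hi : i < k <;> simp [hi, h]

theorem hatInf_zero (x : ℕ → ℝ) : hatInf μ f 0 x = ∫ t, f t ∂μ := by
  simp only [hatInf, Nat.not_lt_zero, if_false]

theorem continuousOn_comp_piecewise (hfc : ContinuousOn f cubeInf) {x : ℕ → ℝ}
    (hx : x ∈ cubeInf) (k : ℕ) :
    ContinuousOn (fun t => f ((Iio k).piecewise x t)) cubeInf :=
  hfc.comp (continuous_piecewise_right (Iio k) x).continuousOn
    fun _ ht => piecewise_mem_cubeInf hx ht k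

theorem hatInf_pos [IsProbabilityMeasure μ] (hU : ∀ᵐ x ∂μ, x ∈ cubeInf)
    (hfc : ContinuousOn f cubeInf) (hf0 : ∀ x ∈ cubeInf, 0 < f x) (k : ℕ) {x : ℕ → ℝ}
    (hx : x ∈ cubeInf) : 0 < hatInf μ f k x := by
  have hpos : ∀ᵐ t ∂μ, 0 < f ((Iio k).piecewise x t) :=
    hU.mono fun t ht => hf0 _ (piecewise_mem_cubeInf hx ht k)
  refine (integral_pos_iff_support_of_nonneg_ae (hpos.mono fun _ h => h.le)
    (integrable_of_continuousOn_of_ae_mem isCompact_cubeInf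
      (continuousOn_comp_piecewise hfc hx k) hU)).2 ?_
  have hsupp : (Function.support fun t => f ((Iio k).piecewise x t)) =ᵐ[μ] univ :=
    eventuallyEq_univ.2 (hpos.mono fun _ h => h.ne')
  rw [measure_congr hsupp, measure_univ]
  exact one_pos

theorem continuousOn_hatInf [IsFiniteMeasure μ] (hU : ∀ᵐ x ∂μ, x ∈ cubeInf)
    (hfc : ContinuousOn f cubeInf) (k : ℕ) : ContinuousOn (hatInf μ f k) cubeInf := by
  obtain ⟨C, hC⟩ := isCompact_cubeInf.exists_bound_of_continuousOn hfc
  refine continuousOn_of_dominated (bound := fun _ => C) (fun x hx => ?_) (fun x hx => ?_)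
    (integrable_const C) ?_
  · exact (integrable_of_continuousOn_of_ae_mem isCompact_cubeInf
      (continuousOn_comp_piecewise hfc hx k) hU).aestronglyMeasurable
  · exact hU.mono fun t ht => hC _ (piecewise_mem_cubeInf hx ht k)
  · exact hU.mono fun t ht => hfc.comp (continuous_piecewise_left (Iio k) t).continuousOn
      fun x hx => piecewise_mem_cubeInf hx ht k

theorem tendstoUniformlyOn_hatInf [IsProbabilityMeasure μ] (hU : ∀ᵐ x ∂μ, x ∈ cubeInf)
    (hfc : ContinuousOn f cubeInf) :
    TendstoUniformlyOn (hatInf μ f) f atTop cubeInf := by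
  have hunif := (isCompact_cubeInf.uniformContinuousOn_of_continuous
    hfc).comp_tendstoUniformlyOn_eventually (.of_forall fun n q hq =>
      piecewise_mem_cubeInf hq.1 hq.2 n) (fun q hq => hq.1)
    (tendstoUniformlyOn_piecewise_Iio (cubeInf ×ˢ cubeInf))
  rw [Metric.tendstoUniformlyOn_iff] at hunif ⊢
  intro ε hε
  filter_upwards [hunif (ε / 2) (half_pos hε)] with n hn x hx
  have hbound : ∀ᵐ t ∂μ, ‖f x - f ((Iio n).piecewise x t)‖ ≤ ε / 2 :=
    hU.mono fun t ht => (hn (x, t) ⟨hx, ht⟩).le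
  have hdiff : f x - hatInf μ f n x = ∫ t, (f x - f ((Iio n).piecewise x t)) ∂μ := by
    rw [integral_sub (integrable_const _) (integrable_of_continuousOn_of_ae_mem isCompact_cubeInf
      (continuousOn_comp_piecewise hfc hx n) hU), integral_const, probReal_univ, one_smul]
    rfl
  calc dist (f x) (hatInf μ f n x) ≤ ε / 2 * μ.real univ := by
        rw [Real.dist_eq, hdiff]
        exact norm_integral_le_of_norm_le_const hbound
    _ < ε := by rw [probReal_univ, mul_one]; exact half_lt_self hε

theorem integral_hatInf_update_mu1 (hμ : IsProductOfMu1 μ) (hfc : ContinuousOn f cubeInf) (k : ℕ)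
    {x : ℕ → ℝ} (hx : x ∈ cubeInf) :
    ∫ s, hatInf μ f (k + 1) (Function.update x k s) ∂mu1 = hatInf μ f k x := by
  have hU := hμ.ae_mem_cubeInf
  have := hμ.1
  have hupd := hμ.measurePreserving_update k
  have hpiece : ∀ (s : ℝ) (t : ℕ → ℝ), (Iio (k + 1)).piecewise (Function.update x k s) t =
      (Iio k).piecewise x (Function.update t k s) := by
    intro s t
    ext i
    rcases lt_trichotomy i k with h | rfl | h
    · simp [Set.piecewise, h, h.ne, h.trans_le k.le_succ]
    · simp [Set.piecewise]
    · simp [Set.piecewise, h.ne', h.not_gt, (Nat.succ_le_of_lt h).not_gt]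
  have hint := integrable_of_continuousOn_of_ae_mem isCompact_cubeInf
    (continuousOn_comp_piecewise hfc hx k) hU
  calc ∫ s, hatInf μ f (k + 1) (Function.update x k s) ∂mu1
      = ∫ s, ∫ t, f ((Iio k).piecewise x (Function.update t k s)) ∂μ ∂mu1 := by
        simp_rw [← hpiece]; rfl
    _ = ∫ q, f ((Iio k).piecewise x (Function.update q.1 k q.2)) ∂(μ.prod mu1) :=
        (integral_prod_symm _ (hupd.integrable_comp_of_integrable hint)).symm
    _ = hatInf μ f k x := by
        rw [← hupd.map_eq] at hint
        conv_rhs => rw [hatInf, ← hupd.map_eq]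
        exact (integral_map hupd.measurable.aemeasurable hint.aestronglyMeasurable).symm

theorem lintegral_mul_hatInf (hμ : IsProductOfMu1 μ) (hfc : ContinuousOn f cubeInf)
    (hf0 : ∀ x ∈ cubeInf, 0 ≤ f x) {n : ℕ} {h : (ℕ → ℝ) → ℝ≥0∞} (hh : AEMeasurable h μ)
    (hdep : ∀ x y : ℕ → ℝ, (∀ i < n, x i = y i) → h x = h y) :
    ∫⁻ x, h x * ENNReal.ofReal (hatInf μ f n x) ∂μ = ∫⁻ x, h x * ENNReal.ofReal (f x) ∂μ := by
  have hU := hμ.ae_mem_cubeInf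
  have := hμ.1
  have hF : AEMeasurable (fun x => h x * ENNReal.ofReal (f x)) μ :=
    hh.mul (aemeasurable_of_continuousOn_of_ae_mem measurableSet_cubeInf hfc hU).ennreal_ofReal
  have hprefix : ∀ x t, h ((Iio n).piecewise x t) = h x := fun x t =>
    hdep _ _ fun i hi => piecewise_eq_of_mem _ _ _ hi
  calc ∫⁻ x, h x * ENNReal.ofReal (hatInf μ f n x) ∂μ
      = ∫⁻ x, ∫⁻ t, h ((Iio n).piecewise x t) * ENNReal.ofReal (f ((Iio n).piecewise x t)) ∂μ
          ∂μ := by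
        refine lintegral_congr_ae (hU.mono fun x hx => ?_)
        have hc := continuousOn_comp_piecewise hfc hx n
        simp only [hprefix]
        rw [lintegral_const_mul'' _ (aemeasurable_of_continuousOn_of_ae_mem
          measurableSet_cubeInf hc hU).ennreal_ofReal,
          ← ofReal_integral_eq_lintegral_ofReal
            (integrable_of_continuousOn_of_ae_mem isCompact_cubeInf hc hU)
            (hU.mono fun t ht => hf0 _ (piecewise_mem_cubeInf hx ht n))]
        rfl
    _ = ∫⁻ x, h x * ENNReal.ofReal (f x) ∂μ :=
        (lintegral_eq_lintegral_lintegral_of_measurePreserving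
          (hμ.measurePreserving_piecewise_Iio n) hF).symm

end Marginal

section ConditionalCDF

variable {μ : Measure (ℕ → ℝ)} {f : (ℕ → ℝ) → ℝ}

/-- The conditional density `f_k = f̂_k / f̂_{k-1}` of the `k`-th coordinate given the previous
ones, with `k = j + 1`. -/
noncomputable def condDensity (μ : Measure (ℕ → ℝ)) (f : (ℕ → ℝ) → ℝ) (j : ℕ) (x : ℕ → ℝ) : ℝ :=
  hatInf μ f (j + 1) x / hatInf μ f j x

theorem condDensity_pos [IsProbabilityMeasure μ] (hU : ∀ᵐ x ∂μ, x ∈ cubeInf)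
    (hfc : ContinuousOn f cubeInf) (hf0 : ∀ x ∈ cubeInf, 0 < f x) (j : ℕ) {x : ℕ → ℝ}
    (hx : x ∈ cubeInf) : 0 < condDensity μ f j x :=
  div_pos (hatInf_pos hU hfc hf0 _ hx) (hatInf_pos hU hfc hf0 _ hx)

theorem prod_condDensity [IsProbabilityMeasure μ] (hU : ∀ᵐ x ∂μ, x ∈ cubeInf)
    (hfc : ContinuousOn f cubeInf) (hf0 : ∀ x ∈ cubeInf, 0 < f x) (n : ℕ) {x : ℕ → ℝ}
    (hx : x ∈ cubeInf) :
    ∏ j ∈ Finset.range n, condDensity μ f j x = hatInf μ f n x / ∫ t, f t ∂μ := by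
  have hne : ∀ k, hatInf μ f k x ≠ 0 := fun k => (hatInf_pos hU hfc hf0 k hx).ne'
  rw [← hatInf_zero x]
  exact Finset.prod_range_induction _ (fun n => hatInf μ f n x / hatInf μ f 0 x)
    (div_self (hne 0)) n fun k _ => (div_mul_div_cancel₀' (hne k) _ _).symm

theorem hatInf_update_self (j : ℕ) (x : ℕ → ℝ) (s : ℝ) :
    hatInf μ f j (Function.update x j s) = hatInf μ f j x :=
  hatInf_congr fun _ hi => Function.update_of_ne hi.ne _ _

theorem FCDFInf_congr {j : ℕ} {x y : ℕ → ℝ} (h : ∀ i ≤ j, x i = y i) :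
    FCDFInf μ f j x = FCDFInf μ f j y := by
  have hlt : ∀ i < j, x i = y i := fun i hi => h i hi.le
  simp only [FCDFInf, h j le_rfl, hatInf_congr hlt,
    hatInf_congr (update_eq_update_of_lt_succ hlt _)]

theorem FCDFInf_eq_intervalIntegral (j : ℕ) {x : ℕ → ℝ} (hx : x j ∈ Icc (-1 : ℝ) 1) :
    FCDFInf μ f j x =
      (∫ t in (-1)..x j, hatInf μ f (j + 1) (Function.update x j t)) / 2 / hatInf μ f j x := by
  rw [FCDFInf, setIntegral_mu1 _ hx]

theorem FCDFInf_update (j : ℕ) (x : ℕ → ℝ) {s : ℝ} (hs : s ∈ Icc (-1 : ℝ) 1) :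
    FCDFInf μ f j (Function.update x j s) =
      (∫ t in (-1)..s, hatInf μ f (j + 1) (Function.update x j t)) / 2 / hatInf μ f j x := by
  rw [FCDFInf_eq_intervalIntegral j (by simpa using hs), hatInf_update_self]
  simp only [Function.update_self, Function.update_idem]

theorem continuousOn_hatInf_update [IsFiniteMeasure μ] (hU : ∀ᵐ x ∂μ, x ∈ cubeInf)
    (hfc : ContinuousOn f cubeInf) (j k : ℕ) {x : ℕ → ℝ} (hx : x ∈ cubeInf) :
    ContinuousOn (fun t => hatInf μ f k (Function.update x j t)) (Icc (-1) 1) :=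
  (continuousOn_hatInf hU hfc k).comp (by fun_prop) fun _ ht => update_mem_cubeInf hx ht j

theorem hasDerivWithinAt_FCDFInf_update [IsFiniteMeasure μ] (hU : ∀ᵐ x ∂μ, x ∈ cubeInf)
    (hfc : ContinuousOn f cubeInf) (j : ℕ) {x : ℕ → ℝ} (hx : x ∈ cubeInf) {s : ℝ}
    (hs : s ∈ Icc (-1 : ℝ) 1) :
    HasDerivWithinAt (fun s => FCDFInf μ f j (Function.update x j s))
      (condDensity μ f j (Function.update x j s) / 2) (Icc (-1) 1) s := by
  have hcont := continuousOn_hatInf_update hU hfc j (j + 1) hx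
  have : Fact (s ∈ Icc (-1 : ℝ) 1) := ⟨hs⟩
  have hint : IntervalIntegrable (fun t => hatInf μ f (j + 1) (Function.update x j t)) volume
      (-1) s := (hcont.mono (uIcc_of_le hs.1 ▸ Icc_subset_Icc_right hs.2)).intervalIntegrable
  have hderiv : HasDerivWithinAt
      (fun s => ∫ t in (-1)..s, hatInf μ f (j + 1) (Function.update x j t))
      (hatInf μ f (j + 1) (Function.update x j s)) (Icc (-1) 1) s :=
    intervalIntegral.integral_hasDerivWithinAt_right hint
      (hcont.stronglyMeasurableAtFilter_nhdsWithin measurableSet_Icc s) (hcont s hs)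
  rw [condDensity, hatInf_update_self, div_right_comm]
  exact ((hderiv.div_const 2).div_const _).congr_of_mem (fun t ht => FCDFInf_update j x ht) hs

theorem hasDerivWithinAt_FCDFInf_update_self [IsFiniteMeasure μ] (hU : ∀ᵐ x ∂μ, x ∈ cubeInf)
    (hfc : ContinuousOn f cubeInf) (j : ℕ) {x : ℕ → ℝ} (hx : x ∈ cubeInf) :
    HasDerivWithinAt (fun s => FCDFInf μ f j (Function.update x j s)) (condDensity μ f j x / 2)
      (Icc (-1) 1) (x j) := by
  simpa only [Function.update_eq_self] using hasDerivWithinAt_FCDFInf_update hU hfc j hx (hx j)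

theorem strictMonoOn_FCDFInf_update [IsProbabilityMeasure μ] (hU : ∀ᵐ x ∂μ, x ∈ cubeInf)
    (hfc : ContinuousOn f cubeInf) (hf0 : ∀ x ∈ cubeInf, 0 < f x) (j : ℕ) {x : ℕ → ℝ}
    (hx : x ∈ cubeInf) :
    StrictMonoOn (fun s => FCDFInf μ f j (Function.update x j s)) (Icc (-1) 1) := by
  have hderiv := fun s hs => hasDerivWithinAt_FCDFInf_update hU hfc j hx (s := s) hs
  exact strictMonoOn_of_hasDerivWithinAt_pos (convex_Icc _ _)
    (fun s hs => (hderiv s hs).continuousWithinAt)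
    (fun s hs => (hderiv s (interior_subset hs)).mono interior_subset)
    fun s hs => half_pos (condDensity_pos hU hfc hf0 j
      (update_mem_cubeInf hx (interior_subset hs) j))

theorem image_FCDFInf_update (hμ : IsProductOfMu1 μ) (hfc : ContinuousOn f cubeInf)
    (hf0 : ∀ x ∈ cubeInf, 0 < f x) (j : ℕ) {x : ℕ → ℝ} (hx : x ∈ cubeInf) :
    (fun s => FCDFInf μ f j (Function.update x j s)) '' Icc (-1) 1 = Icc 0 1 := by
  have hU := hμ.ae_mem_cubeInf
  have := hμ.1
  have hleft : FCDFInf μ f j (Function.update x j (-1)) = 0 := by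
    rw [FCDFInf_update j x (by simp), intervalIntegral.integral_same, zero_div, zero_div]
  have hright : FCDFInf μ f j (Function.update x j 1) = 1 := by
    have hmass : ∫ t in Icc (-1) 1, hatInf μ f (j + 1) (Function.update x j t) ∂mu1 =
        hatInf μ f j x := by
      rw [Measure.restrict_eq_self_of_ae_mem ae_mu1_mem_Icc,
        integral_hatInf_update_mu1 hμ hfc j hx]
    rw [FCDFInf_update j x (by simp), ← setIntegral_mu1 _ (by simp), hmass,
      div_self (hatInf_pos hU hfc hf0 j hx).ne']
  have himage := ContinuousOn.image_Icc_of_monotoneOn (by norm_num)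
    (fun s hs => (hasDerivWithinAt_FCDFInf_update hU hfc j hx hs).continuousWithinAt)
    (strictMonoOn_FCDFInf_update hU hfc hf0 j hx).monotoneOn
  rwa [hleft, hright] at himage

theorem lintegral_comp_FCDFInf_update (hμ : IsProductOfMu1 μ) (hfc : ContinuousOn f cubeInf)
    (hf0 : ∀ x ∈ cubeInf, 0 < f x) (j : ℕ) {x : ℕ → ℝ} (hx : x ∈ cubeInf) (g : ℝ → ℝ≥0∞) :
    ∫⁻ s, g (FCDFInf μ f j (Function.update x j s)) *
        ENNReal.ofReal (hatInf μ f (j + 1) (Function.update x j s)) ∂mu1 =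
      (∫⁻ u in Icc 0 1, g u) * ENNReal.ofReal (hatInf μ f j x) := by
  have hU := hμ.ae_mem_cubeInf
  have := hμ.1
  have hpos := hatInf_pos hU hfc hf0 j hx
  rw [← image_FCDFInf_update hμ hfc hf0 j hx,
    lintegral_image_eq_lintegral_abs_deriv_mul measurableSet_Icc
      (fun s hs => hasDerivWithinAt_FCDFInf_update hU hfc j hx hs)
      (strictMonoOn_FCDFInf_update hU hfc hf0 j hx).injOn, lintegral_mu1,
    ← lintegral_mul_const' _ _ ENNReal.ofReal_ne_top]
  refine setLIntegral_congr_fun measurableSet_Icc fun s hs => ?_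
  have hdens := condDensity_pos hU hfc hf0 j (update_mem_cubeInf hx hs j)
  have hhalf : (2 : ℝ≥0∞)⁻¹ = ENNReal.ofReal 2⁻¹ := by
    rw [ENNReal.ofReal_inv_of_pos two_pos, ENNReal.ofReal_ofNat]
  have hweight : 2⁻¹ * hatInf μ f (j + 1) (Function.update x j s) =
      condDensity μ f j (Function.update x j s) / 2 * hatInf μ f j x := by
    rw [condDensity, hatInf_update_self]
    field_simp
  simp only [abs_of_pos (half_pos hdens)]
  rw [mul_right_comm, ← ENNReal.ofReal_mul (half_pos hdens).le, ← hweight,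
    ENNReal.ofReal_mul (by norm_num), ← hhalf]
  ring

theorem continuousOn_FCDFInf [IsProbabilityMeasure μ] (hU : ∀ᵐ x ∂μ, x ∈ cubeInf)
    (hfc : ContinuousOn f cubeInf) (hf0 : ∀ x ∈ cubeInf, 0 < f x) (j : ℕ) :
    ContinuousOn (FCDFInf μ f j) cubeInf := by
  have hle : (-1 : ℝ) ≤ 1 := by norm_num
  have hintegrand : Continuous (Function.uncurry fun (x : cubeInf) (t : ℝ) =>
      hatInf μ f (j + 1) (Function.update x.1 j (projIcc (-1) 1 hle t))) :=
    (continuousOn_hatInf hU hfc (j + 1)).comp_continuous (by fun_prop)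
      fun q => update_mem_cubeInf q.1.2 (projIcc (-1) 1 hle q.2).2 j
  have hprimitive : ContinuousOn
      (fun x => ∫ t in (-1)..x j, hatInf μ f (j + 1) (Function.update x j t)) cubeInf := by
    rw [continuousOn_iff_continuous_domRestrict]
    refine (intervalIntegral.continuous_parametric_intervalIntegral_of_continuous hintegrand
      ((continuous_apply j).comp continuous_subtype_val)).congr fun x =>
        intervalIntegral.integral_congr fun t ht => ?_
    have ht : t ∈ Icc (-1 : ℝ) 1 :=
      Icc_subset_Icc_right (x.2 j).2 (uIcc_of_le (x.2 j).1 ▸ ht)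
    simp only [projIcc_of_mem hle ht]
  exact ((hprimitive.div_const 2).div (continuousOn_hatInf hU hfc j)
    fun x hx => (hatInf_pos hU hfc hf0 j hx).ne').congr
      fun x hx => FCDFInf_eq_intervalIntegral j (hx j)

end ConditionalCDF

section Rosenblatt

variable {μ : Measure (ℕ → ℝ)} {f : (ℕ → ℝ) → ℝ}

/-- The Rosenblatt transform `x ↦ (F_{f;k}(x_{[k-1]}, x_k))_k` of the cube `[-1,1]^ℕ` onto
`[0,1]^ℕ`. The transport `T` is determined by `rosenblatt μ f_π ∘ T = rosenblatt μ f_ρ`. -/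
noncomputable def rosenblatt (μ : Measure (ℕ → ℝ)) (f : (ℕ → ℝ) → ℝ) (x : ℕ → ℝ) : ℕ → ℝ :=
  fun j => FCDFInf μ f j x

theorem continuousOn_rosenblatt [IsProbabilityMeasure μ] (hU : ∀ᵐ x ∂μ, x ∈ cubeInf)
    (hfc : ContinuousOn f cubeInf) (hf0 : ∀ x ∈ cubeInf, 0 < f x) :
    ContinuousOn (rosenblatt μ f) cubeInf :=
  continuousOn_pi.2 fun j => continuousOn_FCDFInf hU hfc hf0 j

theorem injOn_rosenblatt [IsProbabilityMeasure μ] (hU : ∀ᵐ x ∂μ, x ∈ cubeInf)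
    (hfc : ContinuousOn f cubeInf) (hf0 : ∀ x ∈ cubeInf, 0 < f x) :
    InjOn (rosenblatt μ f) cubeInf := by
  intro x hx y hy hxy
  funext j
  induction j using Nat.strong_induction_on with
  | h j ih =>
    refine (strictMonoOn_FCDFInf_update hU hfc hf0 j hx).injOn (hx j) (hy j) ?_
    have hupdate : ∀ i ≤ j, Function.update x j (y j) i = y i := by
      intro i hi
      rcases hi.lt_or_eq with hij | rfl
      · rw [Function.update_of_ne hij.ne, ih i hij]
      · rw [Function.update_self]
    simp only [Function.update_eq_self, FCDFInf_congr hupdate]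
    exact congrFun hxy j

theorem mapsTo_rosenblatt (hμ : IsProductOfMu1 μ) (hfc : ContinuousOn f cubeInf)
    (hf0 : ∀ x ∈ cubeInf, 0 < f x) :
    MapsTo (rosenblatt μ f) cubeInf (univ.pi fun _ => Icc 0 1) := by
  intro x hx j _
  rw [← image_FCDFInf_update hμ hfc hf0 j hx]
  exact ⟨x j, hx j, by simp only [Function.update_eq_self]; rfl⟩

theorem exists_forall_lt_FCDFInf_eq (hμ : IsProductOfMu1 μ) (hfc : ContinuousOn f cubeInf)
    (hf0 : ∀ x ∈ cubeInf, 0 < f x) {u : ℕ → ℝ} (hu : ∀ i, u i ∈ Icc (0 : ℝ) 1) (n : ℕ) :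
    ∃ x ∈ cubeInf, ∀ i < n, FCDFInf μ f i x = u i := by
  induction n with
  | zero => exact ⟨0, fun _ => by simp, fun _ hi => absurd hi (Nat.not_lt_zero _)⟩
  | succ n ih =>
    obtain ⟨x, hx, hxu⟩ := ih
    obtain ⟨s, hs, hsu⟩ := (image_FCDFInf_update hμ hfc hf0 n hx).symm ▸ hu n
    refine ⟨Function.update x n s, update_mem_cubeInf hx hs n, fun i hi => ?_⟩
    rcases Nat.lt_succ_iff_lt_or_eq.1 hi with hin | rfl
    · rw [← hxu i hin]
      exact FCDFInf_congr fun k hk => Function.update_of_ne (hk.trans_lt hin).ne _ _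
    · exact hsu

theorem bijOn_rosenblatt (hμ : IsProductOfMu1 μ) (hfc : ContinuousOn f cubeInf)
    (hf0 : ∀ x ∈ cubeInf, 0 < f x) :
    BijOn (rosenblatt μ f) cubeInf (univ.pi fun _ => Icc 0 1) := by
  have hU := hμ.ae_mem_cubeInf
  have := hμ.1
  refine ⟨mapsTo_rosenblatt hμ hfc hf0, injOn_rosenblatt hU hfc hf0, fun u hu => ?_⟩
  have hclosed : IsClosed (rosenblatt μ f '' cubeInf) :=
    (isCompact_cubeInf.image_of_continuousOn (continuousOn_rosenblatt hU hfc hf0)).isClosed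
  choose x hx hxu using exists_forall_lt_FCDFInf_eq hμ hfc hf0 fun i => hu i (mem_univ i)
  have hlim : Tendsto (fun n => rosenblatt μ f (x n)) atTop (𝓝 u) :=
    tendsto_pi_nhds.2 fun i => tendsto_const_nhds.congr'
      ((eventually_gt_atTop i).mono fun n hn => (hxu n i hn).symm)
  exact hclosed.mem_of_tendsto hlim (.of_forall fun n => mem_image_of_mem _ (hx n))

theorem lintegral_mul_comp_FCDFInf_mul_hatInf (hμ : IsProductOfMu1 μ)
    (hfc : ContinuousOn f cubeInf) (hf0 : ∀ x ∈ cubeInf, 0 < f x) {n : ℕ}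
    {h : (ℕ → ℝ) → ℝ≥0∞} (hh : AEMeasurable h μ)
    (hdep : ∀ x y : ℕ → ℝ, (∀ i < n, x i = y i) → h x = h y) {g : ℝ → ℝ≥0∞} (hg : Measurable g) :
    ∫⁻ x, h x * g (FCDFInf μ f n x) * ENNReal.ofReal (hatInf μ f (n + 1) x) ∂μ =
      (∫⁻ u in Icc 0 1, g u) * ∫⁻ x, h x * ENNReal.ofReal (hatInf μ f n x) ∂μ := by
  have hU := hμ.ae_mem_cubeInf
  have := hμ.1
  have hH : ∀ k, AEMeasurable (fun x => ENNReal.ofReal (hatInf μ f k x)) μ := fun k =>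
    (aemeasurable_of_continuousOn_of_ae_mem measurableSet_cubeInf
      (continuousOn_hatInf hU hfc k) hU).ennreal_ofReal
  have hG : AEMeasurable (fun x => g (FCDFInf μ f n x)) μ :=
    hg.comp_aemeasurable (aemeasurable_of_continuousOn_of_ae_mem measurableSet_cubeInf
      (continuousOn_FCDFInf hU hfc hf0 n) hU)
  have hprefix : ∀ x s, h (Function.update x n s) = h x := fun x s =>
    hdep _ _ fun i hi => Function.update_of_ne hi.ne _ _
  calc ∫⁻ x, h x * g (FCDFInf μ f n x) * ENNReal.ofReal (hatInf μ f (n + 1) x) ∂μ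
      = ∫⁻ x, ∫⁻ s, h x * g (FCDFInf μ f n (Function.update x n s)) *
          ENNReal.ofReal (hatInf μ f (n + 1) (Function.update x n s)) ∂mu1 ∂μ := by
        simp only [lintegral_eq_lintegral_lintegral_of_measurePreserving
          (hμ.measurePreserving_update n) ((hh.fun_mul hG).fun_mul (hH (n + 1))), hprefix]
    _ = ∫⁻ x, (∫⁻ u in Icc 0 1, g u) * (h x * ENNReal.ofReal (hatInf μ f n x)) ∂μ := by
        refine lintegral_congr_ae (hU.mono fun x hx => ?_)
        dsimp only
        rw [lintegral_comp_FCDFInf_update hμ hfc hf0 n hx fun u => h x * g u,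
          lintegral_const_mul _ hg, mul_right_comm, mul_comm]
    _ = _ := lintegral_const_mul'' _ (hh.mul (hH n))

theorem prod_comp_FCDFInf_congr {g : ℕ → ℝ → ℝ≥0∞} {n : ℕ} {x y : ℕ → ℝ}
    (h : ∀ i < n, x i = y i) :
    ∏ i ∈ Finset.range n, g i (FCDFInf μ f i x) = ∏ i ∈ Finset.range n, g i (FCDFInf μ f i y) :=
  Finset.prod_congr rfl fun i hi => by
    rw [FCDFInf_congr fun k hk => h k (hk.trans_lt (Finset.mem_range.1 hi))]

theorem aemeasurable_prod_comp_FCDFInf [IsProbabilityMeasure μ] (hU : ∀ᵐ x ∂μ, x ∈ cubeInf)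
    (hfc : ContinuousOn f cubeInf) (hf0 : ∀ x ∈ cubeInf, 0 < f x) {g : ℕ → ℝ → ℝ≥0∞}
    (hg : ∀ i, Measurable (g i)) (n : ℕ) :
    AEMeasurable (fun x => ∏ i ∈ Finset.range n, g i (FCDFInf μ f i x)) μ :=
  Finset.aemeasurable_fun_prod _ fun i _ => (hg i).comp_aemeasurable
    (aemeasurable_of_continuousOn_of_ae_mem measurableSet_cubeInf
      (continuousOn_FCDFInf hU hfc hf0 i) hU)

theorem lintegral_prod_comp_FCDFInf_mul_hatInf (hμ : IsProductOfMu1 μ)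
    (hfc : ContinuousOn f cubeInf) (hf0 : ∀ x ∈ cubeInf, 0 < f x) {g : ℕ → ℝ → ℝ≥0∞}
    (hg : ∀ i, Measurable (g i)) (n : ℕ) :
    ∫⁻ x, (∏ i ∈ Finset.range n, g i (FCDFInf μ f i x)) * ENNReal.ofReal (hatInf μ f n x) ∂μ =
      (∏ i ∈ Finset.range n, ∫⁻ u in Icc 0 1, g i u) * ENNReal.ofReal (∫ x, f x ∂μ) := by
  have hU := hμ.ae_mem_cubeInf
  have := hμ.1
  induction n with
  | zero => simp [hatInf_zero]
  | succ n ih =>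
    simp only [Finset.prod_range_succ]
    rw [lintegral_mul_comp_FCDFInf_mul_hatInf hμ hfc hf0
      (aemeasurable_prod_comp_FCDFInf hU hfc hf0 hg n) (fun _ _ => prod_comp_FCDFInf_congr)
      (hg n), ih]
    ring

theorem lintegral_prod_comp_FCDFInf_mul (hμ : IsProductOfMu1 μ)
    (hfc : ContinuousOn f cubeInf) (hf0 : ∀ x ∈ cubeInf, 0 < f x) {g : ℕ → ℝ → ℝ≥0∞}
    (hg : ∀ i, Measurable (g i)) (n : ℕ) :
    ∫⁻ x, (∏ i ∈ Finset.range n, g i (FCDFInf μ f i x)) * ENNReal.ofReal (f x) ∂μ =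
      (∏ i ∈ Finset.range n, ∫⁻ u in Icc 0 1, g i u) * ENNReal.ofReal (∫ x, f x ∂μ) := by
  have hU := hμ.ae_mem_cubeInf
  have := hμ.1
  rw [← lintegral_prod_comp_FCDFInf_mul_hatInf hμ hfc hf0 hg n,
    lintegral_mul_hatInf hμ hfc (fun x hx => (hf0 x hx).le)
      (aemeasurable_prod_comp_FCDFInf hU hfc hf0 hg n) fun _ _ => prod_comp_FCDFInf_congr]

theorem map_rosenblatt (hμ : IsProductOfMu1 μ) (hfc : ContinuousOn f cubeInf)
    (hf0 : ∀ x ∈ cubeInf, 0 < f x) (hf1 : ∫ x, f x ∂μ = 1) :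
    (μ.withDensity fun x => ENNReal.ofReal (f x)).map (rosenblatt μ f) =
      Measure.infinitePi fun _ => volume.restrict (Icc 0 1) := by
  have hU := hμ.ae_mem_cubeInf
  have := hμ.1
  refine eq_infinitePi_of_forall_lt _ fun s hs n => ?_
  have hcyl : MeasurableSet {u : ℕ → ℝ | ∀ i < n, u i ∈ s i} := by
    simp only [ofPred_forall]
    exact .iInter fun i => .iInter fun _ => measurable_pi_apply i (hs i)
  have hΦ : AEMeasurable (rosenblatt μ f) μ :=
    aemeasurable_of_continuousOn_of_ae_mem measurableSet_cubeInf
      (continuousOn_rosenblatt hU hfc hf0) hU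
  have hindicator : ∀ x, (rosenblatt μ f ⁻¹' {u | ∀ i < n, u i ∈ s i}).indicator
      (fun x => ENNReal.ofReal (f x)) x =
      (∏ i ∈ Finset.range n, (s i).indicator 1 (FCDFInf μ f i x)) * ENNReal.ofReal (f x) := by
    classical
    intro x
    simp only [indicator_apply, Pi.one_apply, Finset.prod_ite_zero, Finset.prod_const_one,
      Finset.mem_range, ite_mul, one_mul, zero_mul, mem_preimage, mem_ofPred_eq, rosenblatt]
  rw [Measure.map_apply_of_aemeasurable (hΦ.mono_ac (withDensity_absolutelyContinuous _ _)) hcyl,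
    withDensity_apply', ← lintegral_indicator₀ (hΦ.nullMeasurableSet_preimage hcyl)]
  simp only [hindicator]
  rw [lintegral_prod_comp_FCDFInf_mul hμ hfc hf0 fun i => measurable_one.indicator (hs i), hf1,
    ENNReal.ofReal_one, mul_one]
  exact Finset.prod_congr rfl fun i _ => lintegral_indicator_one (hs i)

end Rosenblatt

section Transport

variable {μ : Measure (ℕ → ℝ)} {f p : (ℕ → ℝ) → ℝ} {T : ℕ → (ℕ → ℝ) → ℝ}

theorem bijOn_of_rosenblatt_comp_eq (hμ : IsProductOfMu1 μ) (hfc : ContinuousOn f cubeInf)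
    (hf0 : ∀ x ∈ cubeInf, 0 < f x) (hpc : ContinuousOn p cubeInf) (hp0 : ∀ x ∈ cubeInf, 0 < p x)
    {S : (ℕ → ℝ) → ℕ → ℝ} (hS : MapsTo S cubeInf cubeInf)
    (hcdf : EqOn (rosenblatt μ p ∘ S) (rosenblatt μ f) cubeInf) : BijOn S cubeInf cubeInf := by
  have hf := bijOn_rosenblatt hμ hfc hf0
  have hp := bijOn_rosenblatt hμ hpc hp0
  refine ⟨hS, (hf.injOn.congr hcdf.symm).of_comp, fun y hy => ?_⟩
  obtain ⟨x, hx, hxy⟩ := hf.surjOn (hp.mapsTo hy)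
  exact ⟨x, hx, hp.injOn (hS hx) hy ((hcdf hx).trans hxy)⟩

theorem continuousOn_of_rosenblatt_comp_eq [IsProbabilityMeasure μ] (hU : ∀ᵐ x ∂μ, x ∈ cubeInf)
    (hfc : ContinuousOn f cubeInf) (hf0 : ∀ x ∈ cubeInf, 0 < f x) (hpc : ContinuousOn p cubeInf)
    (hp0 : ∀ x ∈ cubeInf, 0 < p x) {S : (ℕ → ℝ) → ℕ → ℝ} (hS : MapsTo S cubeInf cubeInf)
    (hcdf : EqOn (rosenblatt μ p ∘ S) (rosenblatt μ f) cubeInf) : ContinuousOn S cubeInf :=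
  continuousOn_of_continuousOn_comp isCompact_cubeInf (continuousOn_rosenblatt hU hpc hp0)
    (injOn_rosenblatt hU hpc hp0) hS ((continuousOn_rosenblatt hU hfc hf0).congr hcdf)

theorem map_withDensity_of_rosenblatt_comp_eq (hμ : IsProductOfMu1 μ)
    (hfc : ContinuousOn f cubeInf) (hf0 : ∀ x ∈ cubeInf, 0 < f x) (hf1 : ∫ x, f x ∂μ = 1)
    (hpc : ContinuousOn p cubeInf) (hp0 : ∀ x ∈ cubeInf, 0 < p x) (hp1 : ∫ x, p x ∂μ = 1)
    {S : (ℕ → ℝ) → ℕ → ℝ} (hS : MapsTo S cubeInf cubeInf)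
    (hcdf : EqOn (rosenblatt μ p ∘ S) (rosenblatt μ f) cubeInf) :
    (μ.withDensity fun x => ENNReal.ofReal (f x)).map S =
      μ.withDensity fun x => ENNReal.ofReal (p x) := by
  have hU := hμ.ae_mem_cubeInf
  have := hμ.1
  have hUdens : ∀ h : (ℕ → ℝ) → ℝ≥0∞, ∀ᵐ x ∂μ.withDensity h, x ∈ cubeInf := fun h =>
    withDensity_absolutelyContinuous μ h hU
  have hSmeas := aemeasurable_of_continuousOn_of_ae_mem measurableSet_cubeInf
    (continuousOn_of_rosenblatt_comp_eq hU hfc hf0 hpc hp0 hS hcdf)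
    (hUdens fun x => ENNReal.ofReal (f x))
  have hUmap : ∀ᵐ y ∂(μ.withDensity fun x => ENNReal.ofReal (f x)).map S, y ∈ cubeInf :=
    (ae_map_iff hSmeas measurableSet_cubeInf).2 ((hUdens _).mono fun x hx => hS hx)
  have hΦ := continuousOn_rosenblatt hU hpc hp0
  refine measure_eq_of_map_eq_of_injOn measurableSet_cubeInf hΦ (injOn_rosenblatt hU hpc hp0)
    hUmap (hUdens _) ?_
  rw [AEMeasurable.map_map_of_aemeasurable
      (aemeasurable_of_continuousOn_of_ae_mem measurableSet_cubeInf hΦ hUmap) hSmeas,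
    Measure.map_congr ((hUdens _).mono hcdf), map_rosenblatt hμ hfc hf0 hf1,
    map_rosenblatt hμ hpc hp0 hp1]

theorem FCDFInf_update_transport
    (hdep : ∀ j : ℕ, ∀ x y : ℕ → ℝ, (∀ i ≤ j, x i = y i) → T j x = T j y)
    (hcdf : EqOn (rosenblatt μ p ∘ fun x j => T j x) (rosenblatt μ f) cubeInf) (j : ℕ)
    {x : ℕ → ℝ} (hx : x ∈ cubeInf) {t : ℝ} (ht : t ∈ Icc (-1 : ℝ) 1) :
    FCDFInf μ p j (Function.update (fun i => T i x) j (T j (Function.update x j t))) =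
      FCDFInf μ f j (Function.update x j t) := by
  have hcdfj : FCDFInf μ p j (fun i => T i (Function.update x j t)) =
      FCDFInf μ f j (Function.update x j t) := congrFun (hcdf (update_mem_cubeInf hx ht j)) j
  rw [← hcdfj]
  refine FCDFInf_congr fun i hi => ?_
  rcases hi.lt_or_eq with hij | rfl
  · rw [Function.update_of_ne hij.ne]
    exact hdep i _ _ fun k hk => (Function.update_of_ne (hk.trans_lt hij).ne _ _).symm
  · rw [Function.update_self]

theorem pdInf_eq_condDensity_div [IsProbabilityMeasure μ] (hU : ∀ᵐ x ∂μ, x ∈ cubeInf)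
    (hfc : ContinuousOn f cubeInf) (hf0 : ∀ x ∈ cubeInf, 0 < f x) (hpc : ContinuousOn p cubeInf)
    (hp0 : ∀ x ∈ cubeInf, 0 < p x) (hT : MapsTo (fun x j => T j x) cubeInf cubeInf)
    (hdep : ∀ j : ℕ, ∀ x y : ℕ → ℝ, (∀ i ≤ j, x i = y i) → T j x = T j y)
    (hcdf : EqOn (rosenblatt μ p ∘ fun x j => T j x) (rosenblatt μ f) cubeInf) (j : ℕ)
    {x : ℕ → ℝ} (hx : x ∈ cubeInf) :
    pdInf T j x = condDensity μ f j x / condDensity μ p j (fun i => T i x) := by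
  have hcont : ContinuousOn (fun t => T j (Function.update x j t)) (Icc (-1) 1) :=
    ((continuous_apply j).comp_continuousOn
      (continuousOn_of_rosenblatt_comp_eq hU hfc hf0 hpc hp0 hT hcdf)).comp (by fun_prop)
        fun t ht => update_mem_cubeInf hx ht j
  have hlim := (hcont (x j) (hx j)).tendsto_nhdsWithin
    fun t ht => hT (update_mem_cubeInf hx ht j) j
  have hf := hasDerivWithinAt_FCDFInf_update_self hU hfc j hx
  have hp : HasDerivWithinAt (fun s => FCDFInf μ p j (Function.update (fun i => T i x) j s))
      (condDensity μ p j (fun i => T i x) / 2) (Icc (-1) 1)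
      (T j (Function.update x j (x j))) := by
    rw [Function.update_eq_self]
    exact hasDerivWithinAt_FCDFInf_update_self hU hpc j (hT hx)
  have hderiv := hasDerivWithinAt_of_comp_left hlim hp hf
    (half_pos (condDensity_pos hU hpc hp0 j (hT hx))).ne'
    (eventually_mem_nhdsWithin.mono fun t ht => FCDFInf_update_transport hdep hcdf j hx ht) (hx j)
  rw [pdInf, hderiv.derivWithin (uniqueDiffOn_Icc (by norm_num) _ (hx j)),
    div_div_div_cancel_right₀ two_ne_zero]

theorem tendstoUniformlyOn_prod_pdInf [IsProbabilityMeasure μ] (hU : ∀ᵐ x ∂μ, x ∈ cubeInf)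
    (hfc : ContinuousOn f cubeInf) (hf0 : ∀ x ∈ cubeInf, 0 < f x) (hf1 : ∫ x, f x ∂μ = 1)
    (hpc : ContinuousOn p cubeInf) (hp0 : ∀ x ∈ cubeInf, 0 < p x) (hp1 : ∫ x, p x ∂μ = 1)
    (hT : MapsTo (fun x j => T j x) cubeInf cubeInf)
    (hdep : ∀ j : ℕ, ∀ x y : ℕ → ℝ, (∀ i ≤ j, x i = y i) → T j x = T j y)
    (hcdf : EqOn (rosenblatt μ p ∘ fun x j => T j x) (rosenblatt μ f) cubeInf) :
    TendstoUniformlyOn (fun n x => ∏ j ∈ Finset.range n, pdInf T j x)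
      (fun x => f x / p fun j => T j x) atTop cubeInf := by
  have hTcont := continuousOn_of_rosenblatt_comp_eq hU hfc hf0 hpc hp0 hT hcdf
  have hquot : TendstoUniformlyOn (fun n x => hatInf μ f n x / hatInf μ p n fun j => T j x)
      (fun x => f x / p fun j => T j x) atTop cubeInf := by
    rw [← tendstoLocallyUniformlyOn_iff_tendstoUniformlyOn_of_compact isCompact_cubeInf]
    exact (tendstoUniformlyOn_hatInf hU hfc).tendstoLocallyUniformlyOn.fun_div₀
      (((tendstoUniformlyOn_hatInf hU hpc).comp _).mono hT).tendstoLocallyUniformlyOn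
      hfc (hpc.comp hTcont hT) fun x hx => (hp0 _ (hT hx)).ne'
  refine hquot.congr (.of_forall fun n x hx => ?_)
  dsimp only
  rw [Finset.prod_congr rfl fun j _ => pdInf_eq_condDensity_div hU hfc hf0 hpc hp0 hT hdep hcdf j
    hx, Finset.prod_div_distrib, prod_condDensity hU hfc hf0 n hx,
    prod_condDensity hU hpc hp0 n (hT hx), hf1, hp1, div_one, div_one]

end Transport

/-- the Knothe–Rosenblatt transport on `U = [-1,1]^ℕ`.
The transport `T = (T_j)` is characterized by: `T_j` maps `U` into `[-1,1]`, depends only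
on the first `j+1` coordinates, and `F_{π;j}((T_i x)_i) = F_{ρ;j}(x)`.  Then `T : U → U`
is bijective and measurable with `T_♯ρ = π`, and the partial products
`∏_{j<n} ∂_{x_j}T_j` converge uniformly to a continuous positive `det dT` with
`f_π(T(x))·det dT(x) = f_ρ(x)` on `U`. -/
theorem stmt15 (μ : Measure (ℕ → ℝ)) (hμ : IsProductOfMu1 μ)
    (fρ fπ : (ℕ → ℝ) → ℝ)
    (hρc : ContinuousOn fρ cubeInf) (hπc : ContinuousOn fπ cubeInf)
    (hρpos : ∀ x ∈ cubeInf, 0 < fρ x) (hπpos : ∀ x ∈ cubeInf, 0 < fπ x)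
    (hρprob : ∫ x, fρ x ∂μ = 1) (hπprob : ∫ x, fπ x ∂μ = 1)
    (T : ℕ → (ℕ → ℝ) → ℝ)
    (hTmem : ∀ j : ℕ, ∀ x ∈ cubeInf, T j x ∈ Set.Icc (-1 : ℝ) 1)
    (hTdep : ∀ j : ℕ, ∀ x y : ℕ → ℝ, (∀ i ≤ j, x i = y i) → T j x = T j y)
    (hTcdf : ∀ j : ℕ, ∀ x ∈ cubeInf,
      FCDFInf μ fπ j (fun i => T i x) = FCDFInf μ fρ j x) :
    -- (1) `T` is bijective, measurable, and pushes `ρ` forward to `π`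
    Set.BijOn (fun x (j : ℕ) => T j x) cubeInf cubeInf ∧
    Measurable (cubeInf.restrict fun x (j : ℕ) => T j x) ∧
    Measure.map (fun x (j : ℕ) => T j x)
        (μ.withDensity fun x => ENNReal.ofReal (fρ x)) =
      μ.withDensity (fun x => ENNReal.ofReal (fπ x)) ∧
    -- (2) uniform convergence of `∏_{j<n} ∂_{x_j}T_j` to a continuous positive `det dT`
    ∃ g : (ℕ → ℝ) → ℝ,
      ContinuousOn g cubeInf ∧ (∀ x ∈ cubeInf, 0 < g x) ∧
      TendstoUniformlyOn (fun n x => ∏ j ∈ Finset.range n, pdInf T j x) g atTop cubeInf ∧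
      ∀ x ∈ cubeInf, fπ (fun j => T j x) * g x = fρ x := by
  have hU := hμ.ae_mem_cubeInf
  have := hμ.1
  have hT : MapsTo (fun x j => T j x) cubeInf cubeInf := fun x hx j => hTmem j x hx
  have hcdf : EqOn (rosenblatt μ fπ ∘ fun x j => T j x) (rosenblatt μ fρ) cubeInf :=
    fun x hx => funext fun j => hTcdf j x hx
  have hTcont := continuousOn_of_rosenblatt_comp_eq hU hρc hρpos hπc hπpos hT hcdf
  have hπT : ∀ x ∈ cubeInf, 0 < fπ fun j => T j x := fun x hx => hπpos _ (hT hx)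
  exact ⟨bijOn_of_rosenblatt_comp_eq hμ hρc hρpos hπc hπpos hT hcdf,
    hTcont.domRestrict.measurable,
    map_withDensity_of_rosenblatt_comp_eq hμ hρc hρpos hρprob hπc hπpos hπprob hT hcdf,
    fun x => fρ x / fπ fun j => T j x,
    hρc.div (hπc.comp hTcont hT) fun x hx => (hπT x hx).ne',
    fun x hx => div_pos (hρpos x hx) (hπT x hx),
    tendstoUniformlyOn_prod_pdInf hU hρc hρpos hρprob hπc hπpos hπprob hT hTdep hcdf,
    fun x hx => mul_div_cancel₀ _ (hπT x hx).ne'⟩
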